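/- arXiv:2208.01384 — 3 statements merged into one kernel-verified Lean document; each statement's English description precedes it below -/
import Mathlib

section
/- Suppose the nonuniform time mesh satisfies: for every k ≥ 2, if ρ* < ρ_k < η then ρ* < ρ_{k+1} ≤ ρ_k²(1+ρ_k)/(1 − 3ρ_k²(1+ρ_k)), and if ρ_k ≥ η then ρ_{k+1} > ρ*. Then the entries of the L2-1_σ matrix satisfy: (i) for all 2 ≤ j ≤ k−1, [M]_{k,j} − [M]_{k,j−1} ≥ (ατ_j/(τ_j + τ_{j+1})) ∫_0^1 (τ_j + τ_{j+1} − sτ_j)(1 − s)(t_k^* − t_{j−1} − sτ_j)^{−α−1} ds, and (ii) for all k ≥ 2, [M]_{k,k} − [M]_{k,k−1} ≥ α/(2(1−α)(στ_k)^α). -/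
open MeasureTheory Real Finset

noncomputable section

/-- Time step `τ_j = t_j - t_{j-1}`. -/
def tau (t : ℕ → ℝ) (j : ℕ) : ℝ := t j - t (j - 1)

/-- Step ratio `ρ_j = τ_j / τ_{j-1}`. -/
def rho (t : ℕ → ℝ) (j : ℕ) : ℝ := tau t j / tau t (j - 1)

/-- Offset node `t_k^* = t_{k-1} + σ τ_k` with `σ = 1 - α/2`. -/
def tstar (α : ℝ) (t : ℕ → ℝ) (k : ℕ) : ℝ := t (k - 1) + (1 - α / 2) * tau t k

/-- L2-1_σ coefficient `a_j^k`. -/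
def acoef (α : ℝ) (t : ℕ → ℝ) (j k : ℕ) : ℝ :=
  ∫ θ in (0:ℝ)..1,
    (-2 * tau t j * (1 - θ) - tau t (j + 1)) /
      ((tau t j + tau t (j + 1)) * (tstar α t k - (t (j - 1) + θ * tau t j)) ^ α)

/-- L2-1_σ coefficient `c_j^k`. -/
def ccoef (α : ℝ) (t : ℕ → ℝ) (j k : ℕ) : ℝ :=
  ∫ θ in (0:ℝ)..1,
    (tau t j ^ 2 * (2 * θ - 1)) /
      (tau t (j + 1) * (tau t j + tau t (j + 1)) *
        (tstar α t k - (t (j - 1) + θ * tau t j)) ^ α)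

/-- `d_j^k = c_{j-1}^k - a_j^k`. -/
def dcoef (α : ℝ) (t : ℕ → ℝ) (j k : ℕ) : ℝ := ccoef α t (j - 1) k - acoef α t j k

/-- The lower-triangular L2-1_σ matrix `M` (entries vanish above the diagonal and
for column index `0`). -/
def Mentry (α : ℝ) (t : ℕ → ℝ) (k j : ℕ) : ℝ :=
  if j = 0 ∨ k < j then 0
  else if j = k then ccoef α t (k - 1) k + (1 - α / 2) ^ (1 - α) / ((1 - α) * tau t k ^ α)
  else if j = 1 then -acoef α t 1 k
  else dcoef α t j k

end

theorem kpos {A h θ : ℝ} (hh : 0 < h) (hA : h < A) (hθ : θ ∈ Set.Icc (0:ℝ) 1) :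
    0 < A - θ * h := by
  have := mul_le_mul_of_nonneg_right hθ.2 hh.le
  linarith

theorem kcont {A h : ℝ} (β : ℝ) (hh : 0 < h) (hA : h < A) :
    ContinuousOn (fun θ : ℝ => (A - θ * h) ^ β) (Set.uIcc 0 1) := by
  rw [Set.uIcc_of_le zero_le_one]
  apply ContinuousOn.rpow_const (by fun_prop)
  intro θ hθ
  exact Or.inl (kpos hh hA hθ).ne'

theorem kint {A h : ℝ} (β p0 p1 p2 : ℝ) (hh : 0 < h) (hA : h < A) :
    IntervalIntegrable (fun θ : ℝ => (p0 + p1 * θ + p2 * θ ^ 2) * (A - θ * h) ^ β) volume 0 1 := by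
  apply ContinuousOn.intervalIntegrable
  exact ContinuousOn.mul (by fun_prop) (kcont β hh hA)

theorem ibp {A h : ℝ} (α p0 p1 p2 : ℝ) (hh : 0 < h) (hA : h < A) :
    ∫ θ in (0:ℝ)..1, (p1 + 2 * p2 * θ) / (A - θ * h) ^ α =
      (p0 + p1 + p2) * (A - h) ^ (-α) - p0 * A ^ (-α)
        - α * h * ∫ θ in (0:ℝ)..1, (p0 + p1 * θ + p2 * θ ^ 2) * (A - θ * h) ^ (-α - 1) := by
  have e1 : ∫ θ in (0:ℝ)..1, (p1 + 2 * p2 * θ) / (A - θ * h) ^ α =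
      ∫ θ in (0:ℝ)..1, (p1 + (2 * p2) * θ + 0 * θ ^ 2) * (A - θ * h) ^ (-α) := by
    apply intervalIntegral.integral_congr
    intro θ hθ
    rw [Set.uIcc_of_le zero_le_one] at hθ
    simp only
    rw [rpow_neg (kpos hh hA hθ).le, div_eq_mul_inv]
    ring
  have e2 := intervalIntegral.integral_eq_sub_of_hasDerivAt (a := 0) (b := 1)
    (f := fun θ : ℝ => (p0 + p1 * θ + p2 * θ ^ 2) * (A - θ * h) ^ (-α))
    (f' := fun θ : ℝ => (p1 + (2 * p2) * θ + 0 * θ ^ 2) * (A - θ * h) ^ (-α)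
      + (α * h) * ((p0 + p1 * θ + p2 * θ ^ 2) * (A - θ * h) ^ (-α - 1))) (by
      intro θ hθ
      rw [Set.uIcc_of_le zero_le_one] at hθ
      have hu : HasDerivAt (fun θ : ℝ => A - θ * h) (-h) θ := by
        simpa using ((hasDerivAt_id θ).mul_const h).const_sub A
      have hk := hu.rpow_const (p := -α) (Or.inl (kpos hh hA hθ).ne')
      have hP : HasDerivAt (fun θ : ℝ => p0 + p1 * θ + p2 * θ ^ 2) (p1 + 2 * p2 * θ) θ := by
        have h1 := (((hasDerivAt_id' θ).const_mul p1).const_add p0).add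
          ((hasDerivAt_pow 2 θ).const_mul p2)
        refine HasDerivAt.congr_deriv (f' := _) h1 ?_
        norm_num
        ring
      refine HasDerivAt.congr_deriv (f' := _) (hP.mul hk) ?_
      ring)
    ((kint (-α) p1 (2 * p2) 0 hh hA).add ((kint (-α - 1) p0 p1 p2 hh hA).const_mul (α * h)))
  rw [intervalIntegral.integral_add (kint (-α) p1 (2 * p2) 0 hh hA)
    ((kint (-α - 1) p0 p1 p2 hh hA).const_mul (α * h)),
    intervalIntegral.integral_const_mul] at e2
  rw [e1]
  norm_num at e2 ⊢
  linarith

theorem pint (p0 p1 p2 c : ℝ) :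
    ∫ θ in (0:ℝ)..1, (p0 + p1 * θ + p2 * θ ^ 2) * c = (p0 + p1 / 2 + p2 / 3) * c := by
  rw [intervalIntegral.integral_mul_const, intervalIntegral.integral_add,
    intervalIntegral.integral_add]
  · simp
    left
    rw [intervalIntegral.integral_const_mul]
    norm_num
    ring
  all_goals apply Continuous.intervalIntegrable; fun_prop

theorem lowb {A h β p0 p1 p2 : ℝ} (hβ : β ≤ 0) (hh : 0 < h) (hA : h < A)
    (hP : ∀ θ ∈ Set.Icc (0:ℝ) 1, 0 ≤ p0 + p1 * θ + p2 * θ ^ 2) :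
    (p0 + p1 / 2 + p2 / 3) * A ^ β ≤
      ∫ θ in (0:ℝ)..1, (p0 + p1 * θ + p2 * θ ^ 2) * (A - θ * h) ^ β := by
  rw [← pint]
  apply intervalIntegral.integral_mono_on zero_le_one _ (kint _ _ _ _ hh hA)
  · intro θ hθ
    apply mul_le_mul_of_nonneg_left _ (hP θ hθ)
    apply rpow_le_rpow_of_nonpos (kpos hh hA hθ) _ hβ
    have := mul_nonneg hθ.1 hh.le
    linarith
  · apply Continuous.intervalIntegrable; fun_prop

theorem uppb {A h β p0 p1 p2 : ℝ} (hβ : β ≤ 0) (hh : 0 < h) (hA : h < A)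
    (hP : ∀ θ ∈ Set.Icc (0:ℝ) 1, 0 ≤ p0 + p1 * θ + p2 * θ ^ 2) :
    ∫ θ in (0:ℝ)..1, (p0 + p1 * θ + p2 * θ ^ 2) * (A - θ * h) ^ β ≤
      (p0 + p1 / 2 + p2 / 3) * (A - h) ^ β := by
  rw [← pint]
  apply intervalIntegral.integral_mono_on zero_le_one (kint _ _ _ _ hh hA)
  · apply Continuous.intervalIntegrable; fun_prop
  · intro θ hθ
    apply mul_le_mul_of_nonneg_left _ (hP θ hθ)
    apply rpow_le_rpow_of_nonpos (by linarith) _ hβ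
    have := mul_le_mul_of_nonneg_right hθ.2 hh.le
    linarith

theorem tau_pos {t : ℕ → ℝ} (hmono : StrictMono t) {j : ℕ} (hj : 1 ≤ j) : 0 < tau t j :=
  sub_pos.mpr (hmono (by omega))

theorem tau_lt {α : ℝ} (hα : α ∈ Set.Ioo (0:ℝ) 1) {t : ℕ → ℝ} (hmono : StrictMono t) {j k : ℕ}
    (hj : 1 ≤ j) (hjk : j ≤ k - 1) : tau t j < tstar α t k - t (j - 1) := by
  have h1 : t j ≤ t (k - 1) := hmono.monotone hjk
  have h2 : 0 < tau t k := tau_pos hmono (by omega)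
  have h3 : 0 < (1 - α / 2) * tau t k := mul_pos (by linarith [hα.2]) h2
  unfold tstar
  unfold tau at h2 h3 ⊢
  linarith

/-- first representation of `a` -/
theorem acoef_eq1 {α : ℝ} (hα : α ∈ Set.Ioo (0:ℝ) 1) {t : ℕ → ℝ} (hmono : StrictMono t) {j k : ℕ}
    (hj : 1 ≤ j) (hjk : j ≤ k - 1) :
    -acoef α t j k = (tstar α t k - t (j - 1)) ^ (-α) +
      α * tau t j / (tau t j + tau t (j + 1)) *
            ∫ s in (0:ℝ)..1,
              (tau t j + tau t (j + 1) - s * tau t j) * (1 - s) *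
                (tstar α t k - t (j - 1) - s * tau t j) ^ (-α - 1) := by
  have hx := tau_pos hmono hj
  have hy := tau_pos hmono (j := j + 1) (by omega)
  have hA := tau_lt hα hmono hj hjk
  unfold acoef
  generalize tau t j = x at *
  generalize tau t (j + 1) = y at *
  have hS : ∀ θ : ℝ, tstar α t k - (t (j - 1) + θ * x) = tstar α t k - t (j - 1) - θ * x :=
    fun θ => by ring
  simp only [hS]
  generalize tstar α t k - t (j - 1) = A at *
  have hxy : 0 < x + y := by linarith
  have e1 : ∀ θ : ℝ, (-2 * x * (1 - θ) - y) / ((x + y) * (A - θ * x) ^ α) =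
      (x + y)⁻¹ * (((-2 * x - y) + 2 * x * θ) / (A - θ * x) ^ α) := by
    intro θ
    rw [mul_comm (x + y), ← div_div, div_eq_inv_mul _ (x + y)]
    ring
  have e2 : ∀ θ : ℝ, (x + y - θ * x) * (1 - θ) * (A - θ * x) ^ (-α - 1) =
      ((x + y) + (-2 * x - y) * θ + x * θ ^ 2) * (A - θ * x) ^ (-α - 1) := by
    intro θ; ring
  simp only [e1, e2]
  rw [intervalIntegral.integral_const_mul, ibp α (x + y) _ _ hx hA]
  field_simp
  ring

/-- second representation of `a` -/
theorem acoef_eq2 {α : ℝ} (hα : α ∈ Set.Ioo (0:ℝ) 1) {t : ℕ → ℝ} (hmono : StrictMono t) {j k : ℕ}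
    (hj : 1 ≤ j) (hjk : j ≤ k - 1) :
    acoef α t j k + (tstar α t k - t j) ^ (-α) =
      α * tau t j / (tau t j + tau t (j + 1)) *
            ∫ s in (0:ℝ)..1, (0 + (2 * tau t j + tau t (j + 1)) * s + (- tau t j) * s ^ 2) *
                (tstar α t k - t (j - 1) - s * tau t j) ^ (-α - 1) := by
  have hx := tau_pos hmono hj
  have hy := tau_pos hmono (j := j + 1) (by omega)
  have hA := tau_lt hα hmono hj hjk
  have hB : tstar α t k - t j = tstar α t k - t (j - 1) - tau t j := by unfold tau; ring
  rw [hB]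
  unfold acoef
  generalize tau t j = x at *
  generalize tau t (j + 1) = y at *
  have hS : ∀ θ : ℝ, tstar α t k - (t (j - 1) + θ * x) = tstar α t k - t (j - 1) - θ * x :=
    fun θ => by ring
  simp only [hS]
  generalize tstar α t k - t (j - 1) = A at *
  have hxy : 0 < x + y := by linarith
  have e1 : ∀ θ : ℝ, (-2 * x * (1 - θ) - y) / ((x + y) * (A - θ * x) ^ α) =
      (-(x + y)⁻¹) * (((2 * x + y) + 2 * (-x) * θ) / (A - θ * x) ^ α) := by
    intro θ
    rw [mul_comm (x + y), ← div_div, div_eq_inv_mul _ (x + y)]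
    ring
  simp only [e1]
  rw [intervalIntegral.integral_const_mul, ibp α 0 _ _ hx hA]
  field_simp
  ring

theorem ccoef_eq {α : ℝ} (hα : α ∈ Set.Ioo (0:ℝ) 1) {t : ℕ → ℝ} (hmono : StrictMono t) {j k : ℕ}
    (hj : 1 ≤ j) (hjk : j ≤ k - 1) :
    ccoef α t j k =
      α * tau t j ^ 3 / (tau t (j + 1) * (tau t j + tau t (j + 1))) *
            ∫ s in (0:ℝ)..1, (0 + 1 * s + (- 1) * s ^ 2) *
                (tstar α t k - t (j - 1) - s * tau t j) ^ (-α - 1) := by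
  have hx := tau_pos hmono hj
  have hy := tau_pos hmono (j := j + 1) (by omega)
  have hA := tau_lt hα hmono hj hjk
  unfold ccoef
  generalize tau t j = x at *
  generalize tau t (j + 1) = y at *
  have hS : ∀ θ : ℝ, tstar α t k - (t (j - 1) + θ * x) = tstar α t k - t (j - 1) - θ * x :=
    fun θ => by ring
  simp only [hS]
  generalize tstar α t k - t (j - 1) = A at *
  have hxy : 0 < x + y := by linarith
  have e1 : ∀ θ : ℝ, (x ^ 2 * (2 * θ - 1)) / (y * (x + y) * (A - θ * x) ^ α) =
      (-(x ^ 2 * (y * (x + y))⁻¹)) * ((1 + 2 * (-1) * θ) / (A - θ * x) ^ α) := by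
    intro θ
    rw [mul_comm (y * (x + y)), ← div_div, div_eq_inv_mul _ (y * (x + y))]
    ring
  simp only [e1]
  rw [intervalIntegral.integral_const_mul, ibp α 0 _ _ hx hA]
  field_simp
  ring

/-- lower bound for `c + a` -/
theorem ca_lower {α : ℝ} (hα : α ∈ Set.Ioo (0:ℝ) 1) {t : ℕ → ℝ} (hmono : StrictMono t) {j k : ℕ}
    (hj : 1 ≤ j) (hjk : j ≤ k - 1) :
    α * tau t j / 6 * (3 + tau t j / tau t (j + 1)) * (tstar α t k - t (j - 1)) ^ (-α - 1) ≤
    ccoef α t j k + acoef α t j k + (tstar α t k - t j) ^ (-α) := by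
  rw [add_assoc, ccoef_eq hα hmono hj hjk, acoef_eq2 hα hmono hj hjk]
  have hx := tau_pos hmono hj
  have hy := tau_pos hmono (j := j + 1) (by omega)
  have hA := tau_lt hα hmono hj hjk
  have hα0 := hα.1
  generalize tau t j = x at *
  generalize tau t (j + 1) = y at *
  generalize tstar α t k - t (j - 1) = A at *
  have h1 := lowb (A := A) (h := x) (β := -α - 1) (p0 := 0) (p1 := 1) (p2 := -1) (by linarith) hx hA
    (fun θ hθ => by nlinarith [mul_nonneg hθ.1 (sub_nonneg.2 hθ.2)])
  have h2 := lowb (A := A) (h := x) (β := -α - 1) (p0 := 0) (p1 := 2 * x + y) (p2 := -x)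
    (by linarith) hx hA
    (fun θ hθ => by
      nlinarith [mul_nonneg hx.le (mul_nonneg hθ.1 (sub_nonneg.2 hθ.2)), mul_nonneg hx.le hθ.1,
        mul_nonneg hy.le hθ.1])
  have c1 : 0 ≤ α * x ^ 3 / (y * (x + y)) := by positivity
  have c2 : 0 ≤ α * x / (x + y) := by positivity
  refine le_trans (le_of_eq ?_) (add_le_add (mul_le_mul_of_nonneg_left h1 c1)
    (mul_le_mul_of_nonneg_left h2 c2))
  field_simp
  ring

theorem c_upper {α : ℝ} (hα : α ∈ Set.Ioo (0:ℝ) 1) {t : ℕ → ℝ} (hmono : StrictMono t) {j k : ℕ}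
    (hj : 1 ≤ j) (hjk : j ≤ k - 1) :
    ccoef α t j k ≤ α * tau t j ^ 3 / (tau t (j + 1) * (tau t j + tau t (j + 1))) / 6 *
      (tstar α t k - t j) ^ (-α - 1) := by
  rw [ccoef_eq hα hmono hj hjk]
  have hx := tau_pos hmono hj
  have hy := tau_pos hmono (j := j + 1) (by omega)
  have hA := tau_lt hα hmono hj hjk
  have hα0 := hα.1
  have hB : tstar α t k - t j = tstar α t k - t (j - 1) - tau t j := by unfold tau; ring
  rw [hB]
  generalize tau t j = x at *
  generalize tau t (j + 1) = y at *
  generalize tstar α t k - t (j - 1) = A at *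
  have h1 := uppb (A := A) (h := x) (β := -α - 1) (p0 := 0) (p1 := 1) (p2 := -1) (by linarith) hx hA
    (fun θ hθ => by nlinarith [mul_nonneg hθ.1 (sub_nonneg.2 hθ.2)])
  have c1 : 0 ≤ α * x ^ 3 / (y * (x + y)) := by positivity
  refine (mul_le_mul_of_nonneg_left h1 c1).trans (le_of_eq ?_)
  ring

/-- consequence of the mesh condition -/
theorem ratio_cond {η r q : ℝ} (hηpos : 0 < η) (hηroot : 1 - 3 * η ^ 2 * (1 + η) = 0)
    (hr : 0 < r) (hq : 0 < q)
    (h : (r < η ∧ q ≤ r ^ 2 * (1 + r) / (1 - 3 * r ^ 2 * (1 + r))) ∨ η ≤ r) :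
    1 / (r ^ 2 * (1 + r)) ≤ 3 + 1 / q := by
  have hz : 0 < r ^ 2 * (1 + r) := by positivity
  rcases h with ⟨h1, h2⟩ | h1
  · have h3 : r ^ 2 * (1 + r) < η ^ 2 * (1 + η) := by
      apply mul_lt_mul'' (pow_lt_pow_left₀ h1 hr.le (by norm_num)) (by linarith) <;> positivity
    have h4 : 0 < 1 - 3 * r ^ 2 * (1 + r) := by nlinarith
    rw [le_div_iff₀ h4] at h2
    rw [add_div' _ _ _ hq.ne', div_le_div_iff₀ hz hq]
    nlinarith
  · have h3 : η ^ 2 * (1 + η) ≤ r ^ 2 * (1 + r) := by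
      apply mul_le_mul (pow_le_pow_left₀ hηpos.le h1 2) (by linarith) <;> positivity
    have : 1 / (r ^ 2 * (1 + r)) ≤ 3 := by
      rw [div_le_iff₀ hz]; nlinarith
    have : 0 < 1 / q := by positivity
    linarith

theorem core {α : ℝ} (hα : α ∈ Set.Ioo (0:ℝ) 1) {t : ℕ → ℝ} (hmono : StrictMono t) {i k : ℕ}
    (hi : 1 ≤ i) (hik : i + 1 ≤ k - 1)
    (hc : 1 / (rho t (i + 1) ^ 2 * (1 + rho t (i + 1))) ≤ 3 + 1 / rho t (i + 2)) :
    ccoef α t i k ≤ ccoef α t (i + 1) k + acoef α t (i + 1) k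
      + (tstar α t k - t (i + 1)) ^ (-α) := by
  refine (c_upper hα hmono hi (by omega)).trans (le_trans ?_ (ca_lower hα hmono (by omega) hik))
  have hx := tau_pos hmono hi
  have hy := tau_pos hmono (j := i + 1) (by omega)
  have hz := tau_pos hmono (j := i + 2) (by omega)
  have hA := tau_lt hα hmono (j := i + 1) (by omega) hik
  have hα0 := hα.1
  simp only [rho, Nat.add_sub_cancel, show i + 2 - 1 = i + 1 by omega,
    show i + 1 + 1 = i + 2 by omega] at *
  have hp : 0 ≤ (tstar α t k - t i) ^ (-α - 1) := rpow_nonneg (by linarith) _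
  apply mul_le_mul_of_nonneg_right _ hp
  generalize tau t i = x at *
  generalize tau t (i + 1) = y at *
  generalize tau t (i + 2) = z at *
  have := mul_le_mul_of_nonneg_left hc (show 0 ≤ α * y / 6 by positivity)
  rw [one_div_div] at this
  refine le_trans (le_of_eq ?_) this
  field_simp

theorem core1 {α : ℝ} (hα : α ∈ Set.Ioo (0:ℝ) 1) {t : ℕ → ℝ} (hmono : StrictMono t) {i k : ℕ}
    (hi : 1 ≤ i) (hik : i ≤ k - 1) :
    0 ≤ ccoef α t i k + acoef α t i k + (tstar α t k - t i) ^ (-α) := by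
  refine le_trans ?_ (ca_lower hα hmono hi hik)
  have hx := tau_pos hmono hi
  have hy := tau_pos hmono (j := i + 1) (by omega)
  have hA := tau_lt hα hmono hi hik
  have hα0 := hα.1
  have hp : 0 ≤ (tstar α t k - t (i - 1)) ^ (-α - 1) := rpow_nonneg (by linarith) _
  positivity

/-- (Q2): lower bounds on consecutive differences of the entries of the L2-1_σ matrix. -/
theorem Mentry_diff_lower_bound (α : ℝ) (hα : α ∈ Set.Ioo (0:ℝ) 1)
    (t : ℕ → ℝ) (ht0 : t 0 = 0) (hmono : StrictMono t)
    (ρstar η : ℝ) (hρpos : 0 < ρstar)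
    (hρroot : ρstar * (1 + ρstar) = 1 - 3 * ρstar ^ 2 * (1 + ρstar))
    (hηpos : 0 < η) (hηroot : 1 - 3 * η ^ 2 * (1 + η) = 0)
    (hmesh : ∀ k : ℕ, 2 ≤ k →
      (ρstar < rho t k ∧ rho t k < η ∧ ρstar < rho t (k + 1) ∧
        rho t (k + 1) ≤ rho t k ^ 2 * (1 + rho t k) /
          (1 - 3 * rho t k ^ 2 * (1 + rho t k))) ∨
      (η ≤ rho t k ∧ ρstar < rho t (k + 1))) :
    (∀ k j : ℕ, 2 ≤ j → j ≤ k - 1 →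
      Mentry α t k j - Mentry α t k (j - 1)
        ≥ α * tau t j / (tau t j + tau t (j + 1)) *
            ∫ s in (0:ℝ)..1,
              (tau t j + tau t (j + 1) - s * tau t j) * (1 - s) *
                (tstar α t k - t (j - 1) - s * tau t j) ^ (-α - 1)) ∧
    (∀ k : ℕ, 2 ≤ k →
      Mentry α t k k - Mentry α t k (k - 1)
        ≥ α / (2 * (1 - α) * ((1 - α / 2) * tau t k) ^ α)) := by
  have hcond : ∀ i : ℕ, 1 ≤ i →
      1 / (rho t (i + 1) ^ 2 * (1 + rho t (i + 1))) ≤ 3 + 1 / rho t (i + 2) := by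
    intro i hi
    apply ratio_cond hηpos hηroot
    · exact div_pos (tau_pos hmono (by omega)) (tau_pos hmono (by omega))
    · exact div_pos (tau_pos hmono (by omega)) (tau_pos hmono (by omega))
    · rcases hmesh (i + 1) (by omega) with h | h
      · exact Or.inl ⟨h.2.1, h.2.2.2⟩
      · exact Or.inr h.1
  -- the key nonnegativity, in terms of the entry in column `m`
  have key : ∀ k m : ℕ, 1 ≤ m → m ≤ k - 1 →
      Mentry α t k m ≤ ccoef α t m k + (tstar α t k - t m) ^ (-α) := by
    intro k m hm hmk
    have n1 : ¬ (m = 0 ∨ k < m) := by omega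
    have n2 : ¬ m = k := by omega
    by_cases h1 : m = 1
    · subst h1
      have := core1 hα hmono hm hmk
      simp only [Mentry, n1, n2, if_false, if_true]
      linarith
    · obtain ⟨i, rfl⟩ : ∃ i, m = i + 1 := ⟨m - 1, by omega⟩
      have := core hα hmono (i := i) (by omega) hmk (hcond i (by omega))
      simp only [Mentry, n1, n2, h1, if_false, dcoef, Nat.add_sub_cancel]
      linarith
  refine ⟨?_, ?_⟩
  · intro k j hj hjk
    have h1 := key k (j - 1) (by omega) (by omega)
    have h2 := acoef_eq1 hα hmono (j := j) (k := k) (by omega) hjk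
    have n1 : ¬ (j = 0 ∨ k < j) := by omega
    have n2 : ¬ j = k := by omega
    have n3 : ¬ j = 1 := by omega
    have h3 : Mentry α t k j = ccoef α t (j - 1) k - acoef α t j k := by
      simp only [Mentry, n1, n2, n3, if_false, dcoef]
    rw [h3]
    linarith
  · intro k hk
    have h1 := key k (k - 1) (by omega) le_rfl
    have n1 : ¬ (k = 0 ∨ k < k) := by omega
    have h3 : Mentry α t k k =
        ccoef α t (k - 1) k + (1 - α / 2) ^ (1 - α) / ((1 - α) * tau t k ^ α) := by
      simp only [Mentry, n1, if_false, if_true]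
    have hx := tau_pos hmono (j := k) (by omega)
    have hs : 0 < 1 - α / 2 := by linarith [hα.2]
    have ha : 0 < 1 - α := by linarith [hα.2]
    have h4 : tstar α t k - t (k - 1) = (1 - α / 2) * tau t k := by unfold tstar; ring
    rw [h4, rpow_neg (by positivity)] at h1
    rw [h3]
    have h5 : (1 - α / 2) ^ (1 - α) / ((1 - α) * tau t k ^ α) =
        α / (2 * (1 - α) * ((1 - α / 2) * tau t k) ^ α) + (((1 - α / 2) * tau t k) ^ α)⁻¹ := by
      rw [mul_rpow hs.le hx.le, rpow_sub hs, rpow_one]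
      have p1 := rpow_pos_of_pos hs α
      have p2 := rpow_pos_of_pos hx α
      generalize (1 - α / 2) ^ α = u at *
      generalize tau t k ^ α = v at *
      field_simp
      ring
    linarith
end

section
/- Suppose the nonuniform time mesh satisfies ρ_k ≥ η for all k ≥ 2, where η ≈ 0.475329 is the unique positive root of 1 − 3ρ²(1+ρ) = 0. Then for every k ≥ 2, the entries of the L2-1_σ matrix satisfy ((1−α)/σ)[M]_{k,k} − [M]_{k,k−1} ≥ 0. -/
open MeasureTheory Real Finset

/-- Tangent line inequality for `x ↦ x^(-α)`. -/
lemma tangent_aux (α x y : ℝ) (hα : 0 < α) (hx : 0 < x) (hy : 0 < y) :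
    y ^ (-α) - α * y ^ (-α - 1) * (x - y) ≤ x ^ (-α) := by
  have hxy : 0 < x / y := div_pos hx hy
  have h1 : 1 - α * (x / y - 1) ≤ (x / y) ^ (-α) := by
    rw [Real.rpow_def_of_pos hxy]
    have h2 := Real.add_one_le_exp (Real.log (x / y) * -α)
    have h3 := Real.log_le_sub_one_of_pos hxy
    nlinarith
  have hyp : 0 < y ^ (-α) := Real.rpow_pos_of_pos hy _
  have h4 : x ^ (-α) = (x / y) ^ (-α) * y ^ (-α) := by
    rw [← Real.mul_rpow hxy.le hy.le, div_mul_cancel₀ _ hy.ne']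
  have h5 : y ^ (-α - 1) = y ^ (-α) / y := by rw [Real.rpow_sub_one hy.ne']
  have h6 := mul_le_mul_of_nonneg_right h1 hyp.le
  rw [h4, h5]
  calc _ = (1 - α * (x / y - 1)) * y ^ (-α) := by field_simp
    _ ≤ _ := h6

lemma lower_diff (α x y : ℝ) (hα : 0 < α) (hx : 0 < x) (hxy : x ≤ y) :
    α * y ^ (-α - 1) * (y - x) ≤ x ^ (-α) - y ^ (-α) := by
  have := tangent_aux α x y hα hx (hx.trans_le hxy)
  linarith

lemma upper_diff (α B x y : ℝ) (hα : 0 < α) (hB : 0 < B) (hBx : B ≤ x) (hxy : x ≤ y) :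
    x ^ (-α) - y ^ (-α) ≤ α * B ^ (-α - 1) * (y - x) := by
  have hx := hB.trans_le hBx
  have h1 := tangent_aux α y x hα (hx.trans_le hxy) hx
  have h2 : x ^ (-α - 1) ≤ B ^ (-α - 1) :=
    Real.rpow_le_rpow_of_nonpos hB hBx (by linarith)
  have h3 : α * x ^ (-α - 1) * (y - x) ≤ α * B ^ (-α - 1) * (y - x) := by
    have : 0 ≤ y - x := by linarith
    gcongr
  linarith

lemma quad_int (a b c : ℝ) : ∫ θ in (0:ℝ)..1, (a + b * θ + c * θ ^ 2) = a + b / 2 + c / 3 := by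
  have h : ∀ x ∈ Set.uIcc (0:ℝ) 1, HasDerivAt (fun θ : ℝ => a * θ + b / 2 * θ ^ 2 + c / 3 * θ ^ 3)
      (a + b * x + c * x ^ 2) x := by
    intro x _
    have := (((hasDerivAt_id x).const_mul a).add ((hasDerivAt_pow 2 x).const_mul (b / 2))).add
      ((hasDerivAt_pow 3 x).const_mul (c / 3))
    refine this.congr_deriv ?_
    norm_num
    ring
  rw [intervalIntegral.integral_eq_sub_of_hasDerivAt h
    (Continuous.intervalIntegrable (by fun_prop) _ _)]
  ring

lemma integrable_aux (α A q C a b : ℝ) (hA : 0 < A) (hq : 0 < q) (hC : C ≠ 0) :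
    IntervalIntegrable (fun θ : ℝ => (a + b * θ) / (C * (A + (1 - θ) * q) ^ α)) volume 0 1 := by
  apply ContinuousOn.intervalIntegrable
  rw [Set.uIcc_of_le zero_le_one]
  have hpos : ∀ θ ∈ Set.Icc (0:ℝ) 1, 0 < A + (1 - θ) * q := by
    intro θ hθ
    have : 0 ≤ (1 - θ) * q := mul_nonneg (by linarith [hθ.2]) hq.le
    linarith
  apply ContinuousOn.div
  · fun_prop
  · apply ContinuousOn.mul continuousOn_const
    apply ContinuousOn.rpow_const
    · fun_prop
    · intro θ hθ
      exact Or.inl (hpos θ hθ).ne'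
  · intro θ hθ
    exact mul_ne_zero hC (Real.rpow_pos_of_pos (hpos θ hθ) _).ne'

lemma quad_integrable (a b c : ℝ) :
    IntervalIntegrable (fun θ : ℝ => a + b * θ + c * θ ^ 2) volume 0 1 :=
  Continuous.intervalIntegrable (by fun_prop) _ _

lemma div_aux (α N C X : ℝ) (hX : 0 < X) : N / (C * X ^ α) = N / C * X ^ (-α) := by
  rw [Real.rpow_neg hX.le, div_mul_eq_div_div, div_eq_mul_inv (N / C)]

lemma a_bound (α A q s : ℝ) (hα : 0 < α) (hA : 0 < A) (hq : 0 < q) (hs : 0 < s) :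
    -A ^ (-α) + α * (A + q) ^ (-α - 1) * q / 2 ≤
    ∫ θ in (0:ℝ)..1, (-2 * q * (1 - θ) - s) / ((q + s) * (A + (1 - θ) * q) ^ α) := by
  set K := α * (A + q) ^ (-α - 1) with hK
  have hK0 : 0 < K := mul_pos hα (Real.rpow_pos_of_pos (by linarith) _)
  have hqs : 0 < q + s := by linarith
  set F := A ^ (-α)
  have key : ∫ θ in (0:ℝ)..1, ((-(2 * q + s) * (F - K * q) / (q + s))
      + ((2 * q * (F - K * q) - (2 * q + s) * (K * q)) / (q + s)) * θ
      + (2 * q * (K * q) / (q + s)) * θ ^ 2) ≤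
      ∫ θ in (0:ℝ)..1, (-2 * q * (1 - θ) - s) / ((q + s) * (A + (1 - θ) * q) ^ α) := by
    apply intervalIntegral.integral_mono_on zero_le_one (quad_integrable _ _ _)
    · have := integrable_aux α A q (q + s) (-2 * q - s) (2 * q) hA hq hqs.ne'
      convert this using 3
      ring
    · intro θ hθ
      have h0 : 0 ≤ 1 - θ := by linarith [hθ.2]
      have h1 : 0 ≤ (1 - θ) * q := mul_nonneg h0 hq.le
      have hX : 0 < A + (1 - θ) * q := by linarith
      rw [div_aux _ _ _ _ hX]
      have h2 := lower_diff α A (A + (1 - θ) * q) hα hA (by linarith)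
      have h3 : (A + q) ^ (-α - 1) ≤ (A + (1 - θ) * q) ^ (-α - 1) :=
        Real.rpow_le_rpow_of_nonpos hX (by nlinarith [hθ.1]) (by linarith)
      have h4 : K * ((1 - θ) * q) ≤ α * (A + (1 - θ) * q) ^ (-α - 1) * ((1 - θ) * q) := by
        rw [hK]; gcongr
      have h5 : (A + (1 - θ) * q) ^ (-α) ≤ F - K * ((1 - θ) * q) := by
        have : A + (1 - θ) * q - A = (1 - θ) * q := by ring
        rw [this] at h2
        linarith
      have h6 : (-2 * q * (1 - θ) - s) / (q + s) ≤ 0 :=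
        div_nonpos_of_nonpos_of_nonneg (by nlinarith) hqs.le
      have h7 := mul_le_mul_of_nonpos_left h5 h6
      refine le_trans (le_of_eq ?_) h7
      field_simp
      ring
  rw [quad_int] at key
  refine le_trans ?_ key
  have : (-(2 * q + s) * (F - K * q) / (q + s))
      + ((2 * q * (F - K * q) - (2 * q + s) * (K * q)) / (q + s)) / 2
      + (2 * q * (K * q) / (q + s)) / 3 = -F + K * q / 2 + K * q * (q / 6) / (q + s) := by
    field_simp
    ring
  rw [this]
  have : 0 ≤ K * q * (q / 6) / (q + s) := by positivity
  linarith

lemma c_bound (α B p q : ℝ) (hα : 0 < α) (hB : 0 < B) (hq : 0 < q) (hp : 0 < p) :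
    ∫ θ in (0:ℝ)..1, (p ^ 2 * (2 * θ - 1)) / (q * (p + q) * (B + (1 - θ) * p) ^ α) ≤
      α * B ^ (-α - 1) * (p ^ 3 / (6 * (q * (p + q)))) := by
  set K := α * B ^ (-α - 1) with hK
  set G := (B + p / 2) ^ (-α) with hG
  have hC : 0 < q * (p + q) := by positivity
  set C := q * (p + q)
  have key : ∫ θ in (0:ℝ)..1, (p ^ 2 * (2 * θ - 1)) / (C * (B + (1 - θ) * p) ^ α) ≤
      ∫ θ in (0:ℝ)..1, (p ^ 2 / C * (-(G - K * p / 2)) +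
        p ^ 2 / C * (2 * (G - K * p / 2) - K * p) * θ + p ^ 2 / C * (2 * K * p) * θ ^ 2) := by
    apply intervalIntegral.integral_mono_on zero_le_one _ (quad_integrable _ _ _)
    · intro θ hθ
      have h0 : 0 ≤ 1 - θ := by linarith [hθ.2]
      have h1 : 0 ≤ (1 - θ) * p := mul_nonneg h0 hp.le
      have hX : 0 < B + (1 - θ) * p := by linarith
      rw [div_aux _ _ _ _ hX]
      have h5 : (2 * θ - 1) * (B + (1 - θ) * p) ^ (-α) ≤
          (2 * θ - 1) * (G + K * (p * (θ - 1 / 2))) := by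
        rcases le_total (1 / 2) θ with h | h
        · have := upper_diff α B (B + (1 - θ) * p) (B + p / 2) hα hB (by linarith) (by nlinarith)
          have e : B + p / 2 - (B + (1 - θ) * p) = p * (θ - 1 / 2) := by ring
          rw [e] at this
          exact mul_le_mul_of_nonneg_left (by linarith) (by linarith)
        · have := upper_diff α B (B + p / 2) (B + (1 - θ) * p) hα hB (by linarith) (by nlinarith)
          have e : B + (1 - θ) * p - (B + p / 2) = -(p * (θ - 1 / 2)) := by ring
          rw [e] at this
          exact mul_le_mul_of_nonpos_left (by linarith) (by linarith)
      have h7 := mul_le_mul_of_nonneg_left h5 (show 0 ≤ p ^ 2 / C by positivity)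
      calc _ = p ^ 2 / C * ((2 * θ - 1) * (B + (1 - θ) * p) ^ (-α)) := by ring
        _ ≤ _ := h7
        _ = _ := by ring
    · have := integrable_aux α B p C (-p ^ 2) (2 * p ^ 2) hB hp hC.ne'
      convert this using 3
      ring
  rw [quad_int] at key
  refine le_trans key (le_of_eq ?_)
  field_simp
  ring

lemma c_nonneg (α A q s : ℝ) (hα : 0 < α) (hA : 0 < A) (hq : 0 < q) (hs : 0 < s) :
    0 ≤ ∫ θ in (0:ℝ)..1, (q ^ 2 * (2 * θ - 1)) / (s * (q + s) * (A + (1 - θ) * q) ^ α) := by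
  set G := (A + q / 2) ^ (-α) with hG
  have hC : 0 < s * (q + s) := by positivity
  set C := s * (q + s)
  have key : ∫ θ in (0:ℝ)..1, (q ^ 2 / C * (-G) + q ^ 2 / C * (2 * G) * θ + 0 * θ ^ 2) ≤
      ∫ θ in (0:ℝ)..1, (q ^ 2 * (2 * θ - 1)) / (C * (A + (1 - θ) * q) ^ α) := by
    apply intervalIntegral.integral_mono_on zero_le_one (quad_integrable _ _ _)
    · have := integrable_aux α A q C (-q ^ 2) (2 * q ^ 2) hA hq hC.ne'
      convert this using 3
      ring
    · intro θ hθ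
      have h0 : 0 ≤ 1 - θ := by linarith [hθ.2]
      have h1 : 0 ≤ (1 - θ) * q := mul_nonneg h0 hq.le
      have hX : 0 < A + (1 - θ) * q := by linarith
      rw [div_aux _ _ _ _ hX]
      have h5 : (2 * θ - 1) * G ≤ (2 * θ - 1) * (A + (1 - θ) * q) ^ (-α) := by
        rcases le_total (1 / 2) θ with h | h
        · exact mul_le_mul_of_nonneg_left
            (Real.rpow_le_rpow_of_nonpos hX (by nlinarith) (by linarith)) (by linarith)
        · exact mul_le_mul_of_nonpos_left
            (Real.rpow_le_rpow_of_nonpos (by linarith) (by nlinarith) (by linarith)) (by linarith)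
      have h7 := mul_le_mul_of_nonneg_left h5 (show 0 ≤ q ^ 2 / C by positivity)
      calc _ = q ^ 2 / C * ((2 * θ - 1) * G) := by ring
        _ ≤ _ := h7
        _ = _ := by ring
  rw [quad_int] at key
  refine le_trans (le_of_eq ?_) key
  ring

/-- (Q3): if `ρ_k ≥ η` for all `k ≥ 2`, then `((1-α)/σ) M_{k,k} - M_{k,k-1} ≥ 0`. -/
theorem Mentry_diag_dominance (α : ℝ) (hα : α ∈ Set.Ioo (0:ℝ) 1)
    (t : ℕ → ℝ) (ht0 : t 0 = 0) (hmono : StrictMono t)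
    (η : ℝ) (hηpos : 0 < η) (hηroot : 1 - 3 * η ^ 2 * (1 + η) = 0)
    (hmesh : ∀ k : ℕ, 2 ≤ k → η ≤ rho t k)
    (k : ℕ) (hk : 2 ≤ k) :
    (1 - α) / (1 - α / 2) * Mentry α t k k - Mentry α t k (k - 1) ≥ 0 := by
  obtain ⟨hα0, hα1⟩ := hα
  obtain ⟨n, rfl⟩ : ∃ n, k = n + 2 := ⟨k - 2, by omega⟩
  have hσ : 0 < 1 - α / 2 := by linarith
  have hq : 0 < tau t (n + 1) := by
    have := hmono (show n < n + 1 by omega)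
    simp only [tau, Nat.add_sub_cancel]; linarith
  have hs : 0 < tau t (n + 2) := by
    have := hmono (show n + 1 < n + 2 by omega)
    simp only [tau, show n + 2 - 1 = n + 1 from rfl]; linarith
  set A := (1 - α / 2) * tau t (n + 2) with hAdef
  have hA : 0 < A := mul_pos hσ hs
  have hK : 0 < α * (A + tau t (n + 1)) ^ (-α - 1) :=
    mul_pos hα0 (Real.rpow_pos_of_pos (by linarith) _)
  have e1 : ∀ θ : ℝ, tstar α t (n + 2) - (t (n + 1 - 1) + θ * tau t (n + 1)) =
      A + (1 - θ) * tau t (n + 1) := by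
    intro θ
    simp only [tstar, hAdef, tau, show n + 2 - 1 = n + 1 from rfl, Nat.add_sub_cancel]; ring
  have ha : -A ^ (-α) + α * (A + tau t (n + 1)) ^ (-α - 1) * tau t (n + 1) / 2
      ≤ acoef α t (n + 1) (n + 2) := by
    have := a_bound α A _ _ hα0 hA hq hs
    simp only [acoef, e1]
    exact this
  have hc : 0 ≤ ccoef α t (n + 1) (n + 2) := by
    have := c_nonneg α A _ _ hα0 hA hq hs
    simp only [ccoef, e1]
    exact this
  have hM1 : Mentry α t (n + 2) (n + 2) = ccoef α t (n + 1) (n + 2) +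
      (1 - α / 2) ^ (1 - α) / ((1 - α) * tau t (n + 2) ^ α) := by
    simp [Mentry]
  have hdiag : A ^ (-α) ≤ (1 - α) / (1 - α / 2) * Mentry α t (n + 2) (n + 2) := by
    rw [hM1, mul_add]
    have h1 : 0 ≤ (1 - α) / (1 - α / 2) * ccoef α t (n + 1) (n + 2) :=
      mul_nonneg (div_nonneg (by linarith) hσ.le) hc
    have h2 : (1 - α) / (1 - α / 2) * ((1 - α / 2) ^ (1 - α) / ((1 - α) * tau t (n + 2) ^ α))
        = A ^ (-α) := by
      rw [hAdef, Real.mul_rpow hσ.le hs.le, Real.rpow_neg hs.le, sub_eq_add_neg 1 α,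
        Real.rpow_add hσ, Real.rpow_one]
      have : 1 + -α ≠ 0 := by linarith
      have := (Real.rpow_pos_of_pos hs α).ne'
      generalize (1 - α / 2) ^ (-α) = z
      have h2α : 2 - α ≠ 0 := by linarith
      field_simp
    linarith
  have hsub : Mentry α t (n + 2) (n + 2 - 1) ≤
      A ^ (-α) := by
    rw [show n + 2 - 1 = n + 1 from rfl]
    rcases Nat.eq_zero_or_pos n with rfl | hn
    · have : Mentry α t (0 + 2) (0 + 1) = -acoef α t (0 + 1) (0 + 2) := by simp [Mentry]
      rw [this]
      have := mul_pos hK hq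
      linarith
    · have hM : Mentry α t (n + 2) (n + 1) = ccoef α t n (n + 2) - acoef α t (n + 1) (n + 2) := by
        simp [Mentry, dcoef, hn.ne']
      rw [hM]
      obtain ⟨m, rfl⟩ : ∃ m, n = m + 1 := ⟨n - 1, by omega⟩
      have hp : 0 < tau t (m + 1) := by
        have := hmono (show m < m + 1 by omega)
        simp only [tau, Nat.add_sub_cancel]; linarith
      have e2 : ∀ θ : ℝ, tstar α t (m + 1 + 2) - (t (m + 1 - 1) + θ * tau t (m + 1)) =
          (A + tau t (m + 1 + 1)) + (1 - θ) * tau t (m + 1) := by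
        intro θ
        simp only [tstar, hAdef, tau, show m + 1 + 2 - 1 = m + 1 + 1 from rfl,
          Nat.add_sub_cancel]; ring
      have hcb : ccoef α t (m + 1) (m + 1 + 2) ≤ α * (A + tau t (m + 1 + 1)) ^ (-α - 1) *
          (tau t (m + 1) ^ 3 / (6 * (tau t (m + 1 + 1) * (tau t (m + 1) + tau t (m + 1 + 1))))) := by
        have := c_bound α (A + tau t (m + 1 + 1)) _ _ hα0 (by linarith) hq hp
        simp only [ccoef, e2]
        exact this
      have hr := hmesh (m + 1 + 1) (by omega)
      simp only [rho, Nat.add_sub_cancel] at hr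
      clear hM1 hM hdiag hmesh e1 e2
      clear_value A
      generalize tau t (m + 1) = p at *
      generalize tau t (m + 1 + 1) = q at *
      rw [le_div_iff₀ hp] at hr
      have h1 : p ^ 3 ≤ 3 * q ^ 2 * (p + q) := by
        have h2 : (η * p) ^ 2 * (p + η * p) ≤ q ^ 2 * (p + q) := by
          have : 0 < η * p := mul_pos hηpos hp
          gcongr
        have h3 : p ^ 3 = 3 * ((η * p) ^ 2 * (p + η * p)) := by
          linear_combination p ^ 3 * hηroot
        linarith
      have h2 : p ^ 3 / (6 * (q * (p + q))) ≤ q / 2 := by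
        rw [div_le_div_iff₀ (by positivity) (by positivity)]
        nlinarith
      have h3 := mul_le_mul_of_nonneg_left h2 hK.le
      linarith
  linarith
end

section
/- Suppose the nonuniform time mesh satisfies ρ_k ≥ η for all k ≥ 2, where η ≈ 0.475329 is the unique positive root of 1 − 3ρ²(1+ρ) = 0. Then for every j ≥ 2 the diagonal and first-column entries of the L2-1_σ matrix satisfy [M]_{j,j} ≤ 1/(η(1+η)(στ_j)^α) + σ^{1−α}/((1−α)τ_j^α) and [M]_{j,1} ≥ η/((1+η)(t_j^*)^α). -/
open MeasureTheory Real Finset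

theorem integral_le_const_aux (f : ℝ → ℝ) (c : ℝ) (hf : ContinuousOn f (Set.Icc 0 1))
    (h : ∀ x ∈ Set.Icc (0:ℝ) 1, f x ≤ c) : ∫ x in (0:ℝ)..1, f x ≤ c := by
  have h1 := intervalIntegral.integral_mono_on (μ := volume) (g := fun _ => c)
    (zero_le_one (α := ℝ))
    (hf.intervalIntegrable_of_Icc zero_le_one) (by simp) h
  simpa using h1

theorem Mentry_diag_col1_bounds (α : ℝ) (hα : α ∈ Set.Ioo (0:ℝ) 1)
    (t : ℕ → ℝ) (ht0 : t 0 = 0) (hmono : StrictMono t)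
    (η : ℝ) (hηpos : 0 < η) (hηroot : 1 - 3 * η ^ 2 * (1 + η) = 0)
    (hmesh : ∀ k : ℕ, 2 ≤ k → η ≤ rho t k)
    (j : ℕ) (hj : 2 ≤ j) :
    Mentry α t j j
        ≤ 1 / (η * (1 + η) * ((1 - α / 2) * tau t j) ^ α)
          + (1 - α / 2) ^ (1 - α) / ((1 - α) * tau t j ^ α) ∧
    Mentry α t j 1 ≥ η / ((1 + η) * tstar α t j ^ α) := by
  obtain ⟨hα0, hα1⟩ := hα
  have htau : ∀ k, 1 ≤ k → 0 < tau t k := fun k hk =>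
    sub_pos.2 (hmono (by omega))
  have hσ : 0 < 1 - α / 2 := by linarith
  have hmesh' : ∀ k, 2 ≤ k → η * tau t (k - 1) ≤ tau t k := fun k hk => by
    have := hmesh k hk
    rw [rho, le_div_iff₀ (htau _ (by omega))] at this
    exact this
  have hsj : 0 < (1 - α / 2) * tau t j := mul_pos hσ (htau j (by omega))
  constructor
  · have e : Mentry α t j j = ccoef α t (j - 1) j
        + (1 - α / 2) ^ (1 - α) / ((1 - α) * tau t j ^ α) := by
      rw [Mentry, if_neg (by omega), if_pos rfl]
    rw [e]
    gcongr
    have e1 : j - 1 + 1 = j := by omega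
    have hm := hmesh' j hj
    have hp := htau (j - 1) (by omega)
    have hq := htau j (by omega)
    have hb : ∀ θ ∈ Set.Icc (0:ℝ) 1, (1 - α / 2) * tau t j ≤
        tstar α t j - (t (j - 1 - 1) + θ * tau t (j - 1)) := by
      intro θ hθ
      have : t (j - 1) = t (j - 1 - 1) + tau t (j - 1) := by simp [tau]
      rw [tstar, this]
      nlinarith [hθ.2]
    unfold ccoef
    rw [e1]
    set p := tau t (j - 1)
    set q := tau t j
    apply integral_le_const_aux
    · apply ContinuousOn.div (by fun_prop)
      · apply ContinuousOn.mul (by fun_prop)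
        apply ContinuousOn.rpow_const (by fun_prop)
        intro θ hθ
        exact Or.inl (hsj.trans_le (hb θ hθ)).ne'
      · intro θ hθ
        have := Real.rpow_pos_of_pos (hsj.trans_le (hb θ hθ)) α
        positivity
    · intro θ hθ
      have h0 := Real.rpow_pos_of_pos hsj α
      have h1 := Real.rpow_le_rpow hsj.le (hb θ hθ) hα0.le
      set B := (tstar α t j - (t (j - 1 - 1) + θ * p)) ^ α
      set A := ((1 - α / 2) * q) ^ α
      have hB : 0 < B := h0.trans_le h1
      have h2 : p ^ 2 * (η * (1 + η)) ≤ q * (p + q) := by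
        calc p ^ 2 * (η * (1 + η)) = (η * p) * (p + η * p) := by ring
          _ ≤ q * (p + q) := by gcongr
      calc p ^ 2 * (2 * θ - 1) / (q * (p + q) * B) ≤ p ^ 2 * 1 / (q * (p + q) * B) := by
            gcongr
            linarith [hθ.2]
        _ ≤ 1 / (η * (1 + η) * A) := by
            rw [div_le_div_iff₀ (by positivity) (by positivity)]
            calc p ^ 2 * 1 * (η * (1 + η) * A) = p ^ 2 * (η * (1 + η)) * A := by ring
              _ ≤ q * (p + q) * B := by gcongr
              _ = _ := by ring
  · have e : Mentry α t j 1 = - acoef α t 1 j := by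
      rw [Mentry, if_neg (by omega), if_neg (by omega), if_pos rfl]
    rw [e, ge_iff_le, le_neg]
    have hm : η * tau t 1 ≤ tau t 2 := hmesh' 2 le_rfl
    have hp := htau 1 le_rfl
    have hq := htau 2 (by omega)
    have ht1 : tau t 1 = t 1 := by simp [tau, ht0]
    have hb : ∀ θ ∈ Set.Icc (0:ℝ) 1, 0 < tstar α t j - (t (1 - 1) + θ * tau t 1) := by
      intro θ hθ
      have : t 1 ≤ t (j - 1) := hmono.monotone (by omega)
      rw [tstar]
      simp only [Nat.sub_self, ht0]
      nlinarith [hθ.2]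
    have hb' : ∀ θ ∈ Set.Icc (0:ℝ) 1,
        tstar α t j - (t (1 - 1) + θ * tau t 1) ≤ tstar α t j := by
      intro θ hθ
      simp only [Nat.sub_self, ht0]
      nlinarith [hθ.1]
    unfold acoef
    rw [show 1 + 1 = 2 from rfl]
    set p := tau t 1
    set q := tau t 2
    apply integral_le_const_aux
    · apply ContinuousOn.div (by fun_prop)
      · apply ContinuousOn.mul (by fun_prop)
        apply ContinuousOn.rpow_const (by fun_prop)
        intro θ hθ
        exact Or.inl (hb θ hθ).ne'
      · intro θ hθ
        have := Real.rpow_pos_of_pos (hb θ hθ) α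
        positivity
    · intro θ hθ
      have hB := Real.rpow_pos_of_pos (hb θ hθ) α
      have h1 := Real.rpow_le_rpow (hb θ hθ).le (hb' θ hθ) hα0.le
      set B := (tstar α t j - (t (1 - 1) + θ * p)) ^ α
      set A := tstar α t j ^ α
      have hA : 0 < A := hB.trans_le h1
      rw [le_neg, ← neg_div]
      have h2 : η * (p + q) ≤ q * (1 + η) := by linarith
      calc η / ((1 + η) * A) ≤ q / ((p + q) * B) := by
            rw [div_le_div_iff₀ (by positivity) (by positivity)]
            calc η * ((p + q) * B) = η * (p + q) * B := by ring
              _ ≤ q * (1 + η) * A := by gcongr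
              _ = _ := by ring
        _ ≤ _ := by
            gcongr
            nlinarith [hθ.2]
end
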